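/- Assume the main setup: 𝒳, 𝒴 finite of equal cardinality K, P_{X|Y} an invertible column-stochastic matrix, P_Y a positive probability vector, P_X = P_{X|Y} ⬝ P_Y positive. Let a, b, c, d be reals with a + b = 1 and c + d = 1, let p₀ ∈ [0,1] with p₁ = 1 − p₀, and let J₀, J₁ ∈ ℝ^𝒳 satisfy ∑_x J_i(x) = 0 and ∑_x J_i(x)²/P_X(x) ≤ 1 for i = 0, 1. For ε ∈ ℝ define I(ε) = p₀ · ∑_y (P_Y(y) + ε·(P_{X|Y}⁻¹ ⬝ (a•J₀ + b•J₁))(y)) · log(1 + ε·(P_{X|Y}⁻¹ ⬝ (a•J₀ + b•J₁))(y)/P_Y(y)) + p₁ · ∑_y (P_Y(y) + ε·(P_{X|Y}⁻¹ ⬝ (c•J₀ + d•J₁))(y)) · log(1 + ε·(P_{X|Y}⁻¹ ⬝ (c•J₀ + d•J₁))(y)/P_Y(y)). Then ε ↦ I(ε) − (ε²/2)·[ p₀·‖W ⬝ (a•L₀ + b•L₁)‖² + p₁·‖W ⬝ (c•L₀ + d•L₁)‖² ] is o(ε²) as ε → 0, where W = [√P_Y⁻¹] ⬝ P_{X|Y}⁻¹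 ⬝ [√P_X] and L_i = [√P_X⁻¹] ⬝ J_i. -/

import Mathlib

open Matrix Filter Asymptotics

/-- Euclidean norm of a real vector on a finite index type. -/
noncomputable def euclNorm {I : Type*} [Fintype I] (v : I → ℝ) : ℝ :=
  Real.sqrt (∑ i, v i ^ 2)

/-- A matrix is column-stochastic if its entries are nonnegative and each column sums to 1. -/
def ColStochastic {I J : Type*} [Fintype I] (M : Matrix I J ℝ) : Prop :=
  (∀ i j, 0 ≤ M i j) ∧ ∀ j, ∑ i, M i j = 1

/-!
The function `klFun x = x log x + 1 - x` vanishes at `1` and has derivative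
`log x = (x - 1) + o(x - 1)`, so `klFun x = (x - 1)² / 2 + o((x - 1)²)`. When `∑ v = 0`, the linear
correction in `D(p + ε v ‖ p) = ∑ p klFun (1 + ε v / p)` cancels, hence
`D(p + ε v ‖ p) = (ε² / 2) ∑ v² / p + o(ε²)`. A right inverse of a matrix with column sums `1`
preserves total mass, so the directions `P_{X|Y}⁻¹ J` are such perturbations `v` of `P_Y`, and
`∑ v² / P_Y` is the squared Euclidean norm of `[√P_Y⁻¹] v`.
-/

open InformationTheory Topology

theorem isLittleO_log_sub_sub_one_nhds_one :
    (fun x : ℝ => Real.log x - (x - 1)) =o[𝓝 1] fun x => x - 1 := by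
  simpa using (Real.hasDerivAt_log one_ne_zero).isLittleO

theorem isLittleO_klFun_sub_half_sq_nhds_one :
    (fun x : ℝ => klFun x - (x - 1) ^ 2 / 2) =o[𝓝 1] fun x => (x - 1) ^ 2 := by
  have hderiv : ∀ x ∈ Set.Ioi (0 : ℝ),
      HasDerivWithinAt (fun x => klFun x - (x - 1) ^ 2 / 2) (Real.log x - (x - 1))
        (Set.Ioi 0) x := by
    intro x hx
    have hsq : HasDerivAt (fun x : ℝ => (x - 1) ^ 2 / 2) (x - 1) x := by
      simpa using (((hasDerivAt_id x).sub_const 1).pow 2).div_const 2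
    exact ((hasDerivAt_klFun (ne_of_gt hx)).sub hsq).hasDerivWithinAt
  have hone : (1 : ℝ) ∈ Set.Ioi 0 := Set.mem_Ioi.2 one_pos
  have hnhds : 𝓝[Set.Ioi 0] (1 : ℝ) = 𝓝 1 := isOpen_Ioi.nhdsWithin_eq hone
  simpa [hnhds, klFun_one] using
    (convex_Ioi (0 : ℝ)).isLittleO_pow_succ_real (n := 1) hone hderiv
      (by simpa [hnhds] using isLittleO_log_sub_sub_one_nhds_one)

theorem isLittleO_klFun_one_add_mul_sub_half_sq (r : ℝ) :
    (fun ε : ℝ => klFun (1 + ε * r) - (ε * r) ^ 2 / 2) =o[𝓝 0] fun ε => ε ^ 2 := by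
  have htendsto : Tendsto (fun ε : ℝ => 1 + ε * r) (𝓝 0) (𝓝 1) :=
    (by fun_prop : Continuous fun ε : ℝ => 1 + ε * r).tendsto' 0 1 (by simp)
  have hbound : (fun ε : ℝ => (ε * r) ^ 2) =O[𝓝 0] fun ε => ε ^ 2 := by
    simpa [mul_pow, mul_comm] using (isBigO_refl (fun ε : ℝ => ε ^ 2) (𝓝 0)).const_mul_left (r ^ 2)
  refine IsLittleO.trans_isBigO ?_ hbound
  simpa [Function.comp_def] using isLittleO_klFun_sub_half_sq_nhds_one.comp_tendsto htendsto

section RelEntropy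

variable {ι : Type*} [Fintype ι]

/-- The relative entropy `D(p + v ‖ p)` of a perturbation of `p`, with the ratio `(p i + v i) / p i`
written as `1 + v i / p i`; at `p i = 0` the logarithm is `log 1 = 0`. -/
noncomputable def relEntropyPerturb (p v : ι → ℝ) : ℝ :=
  ∑ i, (p i + v i) * Real.log (1 + v i / p i)

/-- The `χ²`-divergence of `p + v` from `p`, i.e. the squared norm of `v` in `ℓ²(1 / p)`; it is the
Fisher information metric at `p` in the direction `v`. -/
noncomputable def chiSqPerturb (p v : ι → ℝ) : ℝ :=
  ∑ i, v i ^ 2 / p i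

theorem relEntropyPerturb_eq_sum_mul_klFun {p v : ι → ℝ} (hp : ∀ i, p i ≠ 0)
    (hv : ∑ i, v i = 0) :
    relEntropyPerturb p v = ∑ i, p i * klFun (1 + v i / p i) := by
  rw [relEntropyPerturb, ← sub_zero (∑ i, _), ← hv, ← Finset.sum_sub_distrib]
  refine Finset.sum_congr rfl fun i _ => ?_
  have hcancel : p i * (v i / p i) = v i := mul_div_cancel₀ (v i) (hp i)
  rw [klFun_apply]
  linear_combination (1 - Real.log (1 + v i / p i)) * hcancel

theorem isLittleO_relEntropyPerturb_smul_sub_chiSqPerturb {p v : ι → ℝ} (hp : ∀ i, p i ≠ 0)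
    (hv : ∑ i, v i = 0) :
    (fun ε : ℝ => relEntropyPerturb p (ε • v) - ε ^ 2 / 2 * chiSqPerturb p v)
      =o[𝓝 0] fun ε => ε ^ 2 := by
  have hterms : (fun ε : ℝ => ∑ i, p i * (klFun (1 + ε * (v i / p i)) - (ε * (v i / p i)) ^ 2 / 2))
      =o[𝓝 0] fun ε => ε ^ 2 :=
    IsLittleO.fun_sum fun i _ =>
      (isLittleO_klFun_one_add_mul_sub_half_sq (v i / p i)).const_mul_left (p i)
  refine hterms.congr_left fun ε => ?_
  have hεv : ∑ i, (ε • v) i = 0 := by simp [← Finset.mul_sum, hv]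
  rw [relEntropyPerturb_eq_sum_mul_klFun hp hεv, chiSqPerturb, Finset.mul_sum,
    ← Finset.sum_sub_distrib]
  refine Finset.sum_congr rfl fun i _ => ?_
  have hpi := hp i
  rw [Pi.smul_apply, smul_eq_mul, mul_div_assoc, mul_sub]
  congr 1
  field_simp

theorem euclNorm_sq (v : ι → ℝ) : euclNorm v ^ 2 = ∑ i, v i ^ 2 :=
  Real.sq_sqrt (Finset.sum_nonneg fun i _ => sq_nonneg (v i))

theorem euclNorm_diagonal_inv_sqrt_mulVec_sq [DecidableEq ι] {p : ι → ℝ} (hp : ∀ i, 0 ≤ p i)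
    (v : ι → ℝ) :
    euclNorm (diagonal (fun i => (Real.sqrt (p i))⁻¹) *ᵥ v) ^ 2 = chiSqPerturb p v := by
  rw [euclNorm_sq, chiSqPerturb]
  refine Finset.sum_congr rfl fun i _ => ?_
  rw [mulVec_diagonal, mul_pow, inv_pow, Real.sq_sqrt (hp i), inv_mul_eq_div]

end RelEntropy

section Channel

variable {m n : Type*} [Fintype m] [Fintype n]

theorem sum_mulVec_of_mul_eq_one {R : Type*} [Semiring R] [DecidableEq m]
    {P : Matrix m n R} {Q : Matrix n m R} (hP : ∀ j, ∑ i, P i j = 1) (hPQ : P * Q = 1)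
    (v : m → R) : ∑ j, (Q *ᵥ v) j = ∑ i, v i := by
  have hPcol : 1 ᵥ* P = 1 := by
    ext j
    simpa [vecMul, one_dotProduct] using hP j
  calc ∑ j, (Q *ᵥ v) j = (1 ᵥ* P) ⬝ᵥ (Q *ᵥ v) := by rw [hPcol, one_dotProduct]
    _ = 1 ⬝ᵥ ((P * Q) *ᵥ v) := by rw [← dotProduct_mulVec, mulVec_mulVec]
    _ = ∑ i, v i := by rw [hPQ, one_mulVec, one_dotProduct]

theorem mul_diagonal_mulVec_diagonal_inv_mulVec {l K : Type*} [DivisionRing K]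
    [DecidableEq n] (A : Matrix l n K) {r : n → K} (hr : ∀ i, r i ≠ 0) (v : n → K) :
    (A * diagonal r) *ᵥ (diagonal (fun i => (r i)⁻¹) *ᵥ v) = A *ᵥ v := by
  have hinv : diagonal r * diagonal (fun i => (r i)⁻¹) = 1 := by
    simp [diagonal_mul_diagonal, hr]
  rw [mulVec_mulVec, Matrix.mul_assoc, hinv, Matrix.mul_one]

theorem euclNorm_whitened_mulVec_sq [DecidableEq m] [DecidableEq n] (Q : Matrix n m ℝ)
    {p : n → ℝ} (hp : ∀ j, 0 ≤ p j) {q : m → ℝ} (hq : ∀ i, 0 < q i) (v : m → ℝ) :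
    euclNorm ((diagonal (fun j => (Real.sqrt (p j))⁻¹) * Q * diagonal (fun i => Real.sqrt (q i))) *ᵥ
      (diagonal (fun i => (Real.sqrt (q i))⁻¹) *ᵥ v)) ^ 2 = chiSqPerturb p (Q *ᵥ v) := by
  rw [mul_diagonal_mulVec_diagonal_inv_mulVec _ fun i => Real.sqrt_ne_zero'.2 (hq i),
    ← mulVec_mulVec, euclNorm_diagonal_inv_sqrt_mulVec_sq hp]

end Channel

theorem stmt_19_general {𝒰 𝒳 𝒴 : Type*} [Fintype 𝒰] [Fintype 𝒳] [Fintype 𝒴]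
    [DecidableEq 𝒳] [DecidableEq 𝒴]
    {P : Matrix 𝒳 𝒴 ℝ} (hP : ∀ y, ∑ x, P x y = 1) {Q : Matrix 𝒴 𝒳 ℝ} (hPQ : P * Q = 1)
    {p : 𝒴 → ℝ} (hp : ∀ y, 0 < p y) {q : 𝒳 → ℝ} (hq : ∀ x, 0 < q x)
    (w : 𝒰 → ℝ) {J : 𝒰 → 𝒳 → ℝ} (hJ : ∀ u, ∑ x, J u x = 0) :
    (fun ε : ℝ => ∑ u, w u * relEntropyPerturb p (ε • (Q *ᵥ J u)) - ε ^ 2 / 2 *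
        ∑ u, w u * euclNorm ((diagonal (fun y => (Real.sqrt (p y))⁻¹) * Q *
          diagonal (fun x => Real.sqrt (q x))) *ᵥ
            (diagonal (fun x => (Real.sqrt (q x))⁻¹) *ᵥ J u)) ^ 2)
      =o[𝓝 0] fun ε => ε ^ 2 := by
  have hmass : ∀ u, ∑ y, (Q *ᵥ J u) y = 0 := fun u =>
    (sum_mulVec_of_mul_eq_one hP hPQ (J u)).trans (hJ u)
  have hexpand := IsLittleO.fun_sum fun u (_ : u ∈ Finset.univ) =>
    (isLittleO_relEntropyPerturb_smul_sub_chiSqPerturb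
      (fun y => (hp y).ne') (hmass u)).const_mul_left (w u)
  refine hexpand.congr_left fun ε => ?_
  simp only [euclNorm_whitened_mulVec_sq Q (fun y => (hp y).le) hq, mul_sub,
    Finset.sum_sub_distrib, Finset.mul_sum, mul_left_comm]

theorem stmt_19 {𝒳 𝒴 : Type*} [Fintype 𝒳] [Fintype 𝒴] [DecidableEq 𝒳] [DecidableEq 𝒴]
    (hcard : Fintype.card 𝒳 = Fintype.card 𝒴)
    (PXY : Matrix 𝒳 𝒴 ℝ) (hPXY : ColStochastic PXY)
    (PXYinv : Matrix 𝒴 𝒳 ℝ) (hinv1 : PXY * PXYinv = 1) (hinv2 : PXYinv * PXY = 1)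
    (PY : 𝒴 → ℝ) (hPYpos : ∀ y, 0 < PY y) (hPYsum : ∑ y, PY y = 1)
    (PX : 𝒳 → ℝ) (hPX : PX = PXY.mulVec PY) (hPXpos : ∀ x, 0 < PX x)
    (a b c d : ℝ) (hab : a + b = 1) (hcd : c + d = 1)
    (p₀ : ℝ) (hp₀0 : 0 ≤ p₀) (hp₀1 : p₀ ≤ 1)
    (J₀ J₁ : 𝒳 → ℝ)
    (hJ₀1 : ∑ x, J₀ x = 0) (hJ₁1 : ∑ x, J₁ x = 0)
    (hJ₀3 : ∑ x, J₀ x ^ 2 / PX x ≤ 1) (hJ₁3 : ∑ x, J₁ x ^ 2 / PX x ≤ 1)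
    (I : ℝ → ℝ)
    (hI : ∀ ε, I ε =
      p₀ * ∑ y, (PY y + ε * PXYinv.mulVec (a • J₀ + b • J₁) y) *
        Real.log (1 + ε * PXYinv.mulVec (a • J₀ + b • J₁) y / PY y)
      + (1 - p₀) * ∑ y, (PY y + ε * PXYinv.mulVec (c • J₀ + d • J₁) y) *
        Real.log (1 + ε * PXYinv.mulVec (c • J₀ + d • J₁) y / PY y))
    (W : Matrix 𝒴 𝒳 ℝ)
    (hW : W = diagonal (fun y => (Real.sqrt (PY y))⁻¹) * PXYinv *
      diagonal (fun x => Real.sqrt (PX x)))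
    (L₀ L₁ : 𝒳 → ℝ)
    (hL₀ : L₀ = (diagonal fun x => (Real.sqrt (PX x))⁻¹).mulVec J₀)
    (hL₁ : L₁ = (diagonal fun x => (Real.sqrt (PX x))⁻¹).mulVec J₁) :
    (fun ε => I ε - ε ^ 2 / 2 *
        (p₀ * euclNorm (W.mulVec (a • L₀ + b • L₁)) ^ 2
          + (1 - p₀) * euclNorm (W.mulVec (c • L₀ + d • L₁)) ^ 2))
      =o[nhds 0] (fun ε => ε ^ 2) := by
  have hJ : ∀ u, ∑ x, ![a • J₀ + b • J₁, c • J₀ + d • J₁] u x = 0 := by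
    simp [Fin.forall_fin_two, Finset.sum_add_distrib, ← Finset.mul_sum, hJ₀1, hJ₁1]
  simpa [Fin.sum_univ_two, relEntropyPerturb, hI, hW, hL₀, hL₁, mulVec_add, mulVec_smul] using
    stmt_19_general hPXY.2 hinv1 hPYpos hPXpos ![p₀, 1 - p₀] hJ
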